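/- Let Γ be a distance-regular graph of diameter D ≥ 3 with classical parameters (D, b, α, β), where b is an integer with b ≠ 0 and b ≠ −1. Then θ = −1 + b_1/b is an eigenvalue of the adjacency matrix of Γ and is of classical b-type; in particular, the b-distance matrix 𝔻_b of Γ has exactly three distinct eigenvalues, of which one is equal to 0. -/

import Mathlib

/-- `G` is a distance-regular graph of diameter `D` with intersection numbers
`p h i j = p^h_{ij}`: for any two vertices `x, y` at distance `h`, the number of
vertices `z` with `d(x,z) = i` and `d(y,z) = j` equals `p h i j`. -/
structure IsDRG {V : Type*} [Fintype V] (G : SimpleGraph V) (D : ℕ)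
    (p : ℕ → ℕ → ℕ → ℕ) : Prop where
  connected : G.Connected
  dist_le : ∀ x y : V, G.dist x y ≤ D
  exists_dist_eq : ∃ x y : V, G.dist x y = D
  inter : ∀ h i j : ℕ, h ≤ D → i ≤ D → j ≤ D → ∀ x y : V, G.dist x y = h →
    {z : V | G.dist x z = i ∧ G.dist y z = j}.ncard = p h i j

/-- `u` is the standard sequence of `θ` for a distance-regular graph with
intersection numbers `p` (so valency `k = b₀ = p 0 1 1`, `cᵢ = p i 1 (i-1)`,
`aᵢ = p i 1 i`, `bᵢ = p i 1 (i+1)`). -/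
def IsStdSeq (D : ℕ) (p : ℕ → ℕ → ℕ → ℕ) (θ : ℝ) (u : ℕ → ℝ) : Prop :=
  u 0 = 1 ∧ u 1 = θ / (p 0 1 1 : ℝ) ∧
    ∀ i : ℕ, 1 ≤ i → i ≤ D - 1 →
      (p i 1 (i - 1) : ℝ) * u (i - 1) + (p i 1 i : ℝ) * u i
          + (p i 1 (i + 1) : ℝ) * u (i + 1) = θ * u i

/-- The sequence `u` (a standard sequence) is of classical `q`-type:
`u i = (1/q) * u (i-1) + c` for `i = 1, …, D`, for some real `c`. -/
def IsClassicalQType (D : ℕ) (q : ℝ) (u : ℕ → ℝ) : Prop :=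
  ∃ c : ℝ, ∀ i : ℕ, 1 ≤ i → i ≤ D → u i = (1 / q) * u (i - 1) + c

/-- `θ` is an eigenvalue of the adjacency matrix of `G`. -/
def IsAdjEigenval {V : Type*} [Fintype V] (G : SimpleGraph V) [DecidableRel G.Adj]
    (θ : ℝ) : Prop :=
  ∃ v : V → ℝ, v ≠ 0 ∧ (G.adjMatrix ℝ).mulVec v = θ • v

/-- The `q`-distance matrix of a graph `G`: the `(x,y)` entry is
`∑_{j=0}^{d(x,y)-1} q^{-j}` (and `0` on the diagonal, since `d(x,x) = 0`). -/
noncomputable def qDistMatrix {V : Type*} [Fintype V] (G : SimpleGraph V) (q : ℝ) :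
    Matrix V V ℝ :=
  Matrix.of fun x y => ∑ j ∈ Finset.range (G.dist x y), (1 / q) ^ j

/-- `θ` is an eigenvalue of the real matrix `M`. -/
def IsEigenval {n : Type*} [Fintype n] (M : Matrix n n ℝ) (θ : ℝ) : Prop :=
  ∃ v : n → ℝ, v ≠ 0 ∧ M.mulVec v = θ • v

/-- The Gaussian coefficient `[j]_b = 1 + b + b² + ⋯ + b^(j-1)` (with `[0]_b = 0`),
as a real number. -/
def gaussCoeff (b : ℤ) (j : ℕ) : ℝ :=
  ∑ i ∈ Finset.range j, (b : ℝ) ^ i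

/-!
Let `k = b₀` and `θ = -1 + b₁ / b`. The formulas for `bᵢ` and `cᵢ` give the identity
`bᵢ - b cᵢ = k bⁱ - b (k - θ) [i]`. It says that `uᵢ = 1 - (1 - θ / k) [i]_{1/b}` satisfies the
recurrence of the standard sequence of `θ` for every `1 ≤ i ≤ D`, so that the matrix
`U = (u_{d(x,y)})` satisfies `A U = θ U`. It also shows `θ ≠ k`: otherwise `b₁ = b (k + 1)` forces
`b > 0`, whereas `i = D` gives `-b c_D = k b ^ D`.

By distance-regularity `U²` depends only on the distance, and a matrix of this kind with
`A M = θ M` is determined by its diagonal; hence `U` is a multiple of an idempotent orthogonal to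
the all-ones matrix `J`. Since `u` is affine in `[i]_{1/b}`, the `b`-distance matrix is
a multiple of `J - U`, and it is singular because `J` and `U` do not span the identity
matrix when `D ≥ 2`.
-/

open Finset Matrix

section Spectrum

variable {n K : Type*} [Fintype n] [Field K]

lemma isIdempotentElem_inv_smul {R : Type*} [Ring R] [Algebra K R] {c : K} (hc : c ≠ 0) {x : R}
    (hx : x * x = c • x) : IsIdempotentElem (c⁻¹ • x) := by
  rw [IsIdempotentElem, smul_mul_smul_comm, hx, smul_smul, inv_mul_cancel_right₀ hc]

lemma exists_mulVec_eq_smul_of_mul_eq_smul {M R : Matrix n n K} {η : K} (hR : R ≠ 0)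
    (hMR : M * R = η • R) : ∃ v, v ≠ 0 ∧ M *ᵥ v = η • v := by
  obtain ⟨x, y, hxy⟩ : ∃ x y, R x y ≠ 0 := by
    by_contra! h
    exact hR (Matrix.ext h)
  exact ⟨R.col y, fun h => hxy (congrFun h x), funext fun z => congrFun (congrFun hMR z) y⟩

theorem exists_mulVec_smul_add_smul_eq_smul_iff [DecidableEq n] {P Q : Matrix n n K}
    (hP : IsIdempotentElem P) (hQ : IsIdempotentElem Q) (hPQ : P * Q = 0) (hQP : Q * P = 0)
    (hP0 : P ≠ 0) (hQ0 : Q ≠ 0) (hPQ1 : P + Q ≠ 1) {a a' η : K} :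
    (∃ v, v ≠ 0 ∧ (a • P + a' • Q) *ᵥ v = η • v) ↔ η = a ∨ η = a' ∨ η = 0 := by
  constructor
  · rintro ⟨v, hv, h⟩
    have hPv : a • P *ᵥ v = η • P *ᵥ v := by
      simpa [mul_add, hP.eq, hPQ, smul_mulVec, mulVec_smul] using congrArg (P *ᵥ ·) h
    have hQv : a' • Q *ᵥ v = η • Q *ᵥ v := by
      simpa [mul_add, hQ.eq, hQP, smul_mulVec, mulVec_smul] using congrArg (Q *ᵥ ·) h
    by_cases hP' : P *ᵥ v = 0
    · by_cases hQ' : Q *ᵥ v = 0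
      · have hηv : η • v = 0 := by simp [← h, add_mulVec, smul_mulVec, hP', hQ']
        exact .inr (.inr ((smul_eq_zero.1 hηv).resolve_right hv))
      · exact .inr (.inl (smul_left_injective K hQ' hQv).symm)
    · exact .inl (smul_left_injective K hP' hPv).symm
  · rintro (rfl | rfl | rfl)
    · exact exists_mulVec_eq_smul_of_mul_eq_smul hP0 (by simp [add_mul, hP.eq, hQP])
    · exact exists_mulVec_eq_smul_of_mul_eq_smul hQ0 (by simp [add_mul, hQ.eq, hPQ])
    · refine exists_mulVec_eq_smul_of_mul_eq_smul (sub_ne_zero.2 hPQ1.symm) ?_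
      simp [mul_sub, mul_add, add_mul, hP.eq, hQ.eq, hPQ, hQP]

end Spectrum

section QNumber

/-- The `q`-number `[n]_q = 1 + q + ⋯ + q ^ (n - 1)` for real `q`; at an integer `b` it is
`gaussCoeff b n`, and the entries of the `q`-distance matrix are `[d(x, y)]_{1/q}`. -/
noncomputable def qNumber (q : ℝ) (n : ℕ) : ℝ :=
  ∑ i ∈ range n, q ^ i

@[simp]
lemma qNumber_zero (q : ℝ) : qNumber q 0 = 0 := geom_sum_zero q

@[simp]
lemma qNumber_one (q : ℝ) : qNumber q 1 = 1 := geom_sum_one q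

lemma qNumber_succ (q : ℝ) (n : ℕ) : qNumber q (n + 1) = q * qNumber q n + 1 := geom_sum_succ

lemma qNumber_succ' (q : ℝ) (n : ℕ) : qNumber q (n + 1) = q ^ n + qNumber q n := geom_sum_succ'

lemma sub_one_mul_qNumber (q : ℝ) (n : ℕ) : (q - 1) * qNumber q n = q ^ n - 1 := mul_geom_sum q n

lemma qNumber_one_div_succ {q : ℝ} (hq : q ≠ 0) (n : ℕ) :
    qNumber (1 / q) (n + 1) = (1 / q) ^ n * qNumber q (n + 1) := by
  induction n with
  | zero => simp
  | succ n ih =>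
    rw [qNumber_succ', ih, qNumber_succ q (n + 1)]
    linear_combination -((1 / q) ^ n * qNumber q (n + 1)) * mul_one_div_cancel hq

/-- The sequence of classical `q`-type (see `IsClassicalQType`) with initial terms `1, 1 - t`. -/
noncomputable def classicalSeq (q t : ℝ) (i : ℕ) : ℝ :=
  1 - t * qNumber (1 / q) i

lemma isClassicalQType_classicalSeq (D : ℕ) (q t : ℝ) :
    IsClassicalQType D q (classicalSeq q t) := by
  refine ⟨1 - 1 / q - t, fun i hi _ => ?_⟩
  obtain ⟨m, rfl⟩ := Nat.exists_eq_add_of_le' hi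
  simp only [classicalSeq, qNumber_succ, Nat.add_sub_cancel]
  ring

lemma IsClassicalQType.eq_classicalSeq {D : ℕ} {q : ℝ} {u : ℕ → ℝ} (hu : IsClassicalQType D q u)
    (hu0 : u 0 = 1) {i : ℕ} (hi : i ≤ D) : u i = classicalSeq q (1 - u 1) i := by
  obtain ⟨c, hc⟩ := hu
  induction i with
  | zero => simp [classicalSeq, hu0]
  | succ m ih =>
    have h1 := hc 1 le_rfl (by lia)
    have hm := hc (m + 1) (by lia) hi
    rw [Nat.sub_self, hu0] at h1
    rw [Nat.add_sub_cancel, ih (by lia)] at hm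
    simp only [hm, classicalSeq, qNumber_succ]
    linear_combination -h1

lemma IsClassicalQType.apply_one_ne_apply_two {D : ℕ} {q : ℝ} {u : ℕ → ℝ}
    (hu : IsClassicalQType D q u) (hD : 2 ≤ D) (hq : q ≠ 0) (hu0 : u 0 = 1) (hu1 : u 1 ≠ 1) :
    u 1 ≠ u 2 := by
  have hdiff : u 1 - u 2 = (1 - u 1) / q := by
    rw [hu.eq_classicalSeq hu0 hD, classicalSeq, qNumber_succ, qNumber_one]
    ring
  rw [← sub_ne_zero, hdiff]
  exact div_ne_zero (sub_ne_zero.2 hu1.symm) hq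

end QNumber

section DistMatrix

variable {V : Type*} {G : SimpleGraph V}

/-- The matrix `(f (d(x, y)))` attached to a function `f` of the distance. For a distance-regular
graph these matrices form the Bose–Mesner algebra. -/
noncomputable def distMatrix (G : SimpleGraph V) : (ℕ → ℝ) →ₗ[ℝ] Matrix V V ℝ where
  toFun f := of fun x y => f (G.dist x y)
  map_add' _ _ := rfl
  map_smul' _ _ := rfl

@[simp]
lemma distMatrix_apply (f : ℕ → ℝ) (x y : V) : distMatrix G f x y = f (G.dist x y) := rfl

lemma transpose_distMatrix (f : ℕ → ℝ) : (distMatrix G f)ᵀ = distMatrix G f := by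
  ext x y
  simp [G.dist_comm (u := x)]

lemma distMatrix_ne_zero [Nonempty V] {f : ℕ → ℝ} (hf : f 0 ≠ 0) : distMatrix G f ≠ 0 := by
  intro h
  obtain ⟨x⟩ := ‹Nonempty V›
  exact hf (by simpa using congrFun (congrFun h x) x)

lemma distMatrix_one_mul_self [Fintype V] :
    distMatrix G 1 * distMatrix G 1 = (Fintype.card V : ℝ) • distMatrix G 1 := by
  ext x y
  simp [mul_apply]

lemma exists_adj_dist_eq_of_dist_eq_succ {x y : V} {n : ℕ} (h : G.dist x y = n + 1) :
    ∃ z, G.Adj x z ∧ G.dist z y = n := by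
  obtain ⟨w, hw⟩ := SimpleGraph.exists_walk_of_dist_ne_zero (by lia : G.dist x y ≠ 0)
  cases w with
  | nil => simp at h
  | @cons _ z _ hadj w =>
    refine ⟨z, hadj, ?_⟩
    have hle := SimpleGraph.dist_le w
    have hadj' : G.dist x z = 1 := SimpleGraph.dist_eq_one_iff_adj.2 hadj
    have htri := hadj.reachable.dist_triangle_left y
    rw [SimpleGraph.Walk.length_cons] at hw
    lia

variable [Fintype V] [DecidableRel G.Adj] {θ : ℝ} {f : ℕ → ℝ}

lemma apply_eq_zero_of_adjMatrix_mul_distMatrix (hf : f 0 = 0)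
    (hθ : G.adjMatrix ℝ * distMatrix G f = θ • distMatrix G f) (x y : V) :
    f (G.dist x y) = 0 := by
  induction hn : G.dist x y using Nat.strong_induction_on generalizing x y with
  | _ n ih =>
    obtain _ | n := n
    · exact hf
    obtain ⟨x', hadj, hx'⟩ := exists_adj_dist_eq_of_dist_eq_succ hn
    -- In row `x'` only the neighbours at distance `n + 1` from `y`, such as `x`, contribute.
    have hterm : ∀ z ∈ G.neighborFinset x',
        f (G.dist z y) = if G.dist z y = n + 1 then f (n + 1) else 0 := by
      intro z hz
      split_ifs with hzy
      · rw [hzy]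
      · have := ((G.mem_neighborFinset x' z).1 hz).diff_dist_adj (u := y)
        rw [G.dist_comm (v := x'), G.dist_comm (v := z)] at this
        exact ih _ (by lia) z y rfl
    have hrow := congrFun (congrFun hθ x') y
    simp only [SimpleGraph.adjMatrix_mul_apply, distMatrix_apply, Matrix.smul_apply, hx',
      ih n n.lt_succ_self x' y hx', smul_zero] at hrow
    rw [sum_congr rfl hterm, ← sum_filter, sum_const, smul_eq_zero] at hrow
    refine hrow.resolve_left (card_ne_zero_of_mem (a := x) ?_)
    simp [hadj.symm, hn]

lemma distMatrix_eq_smul_of_adjMatrix_mul {g : ℕ → ℝ} (hf0 : f 0 = 1)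
    (hf : G.adjMatrix ℝ * distMatrix G f = θ • distMatrix G f)
    (hg : G.adjMatrix ℝ * distMatrix G g = θ • distMatrix G g) :
    distMatrix G g = g 0 • distMatrix G f := by
  have h := apply_eq_zero_of_adjMatrix_mul_distMatrix (G := G) (f := g - g 0 • f) (θ := θ)
    (by simp [hf0])
    (by rw [map_sub, map_smul, mul_sub, Matrix.mul_smul, hf, hg, smul_sub, smul_comm])
  ext x y
  simpa [sub_eq_zero] using h x y

lemma adjMatrix_mul_distMatrix_one {k : ℕ} (hG : G.IsRegularOfDegree k) :
    G.adjMatrix ℝ * distMatrix G 1 = (k : ℝ) • distMatrix G 1 := by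
  ext x y
  simp [hG x]

lemma distMatrix_one_mul_eq_zero {k : ℕ} (hG : G.IsRegularOfDegree k) (hθk : θ ≠ k)
    (hf : G.adjMatrix ℝ * distMatrix G f = θ • distMatrix G f) :
    distMatrix G 1 * distMatrix G f = 0 := by
  have hJA : distMatrix G 1 * G.adjMatrix ℝ = (k : ℝ) • distMatrix G 1 := by
    simpa [transpose_distMatrix] using congrArg transpose (adjMatrix_mul_distMatrix_one hG)
  have h : θ • (distMatrix G 1 * distMatrix G f) = (k : ℝ) • (distMatrix G 1 * distMatrix G f) := by
    rw [← Matrix.mul_smul, ← hf, ← Matrix.mul_assoc, hJA, Matrix.smul_mul]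
  by_contra h0
  exact hθk (smul_left_injective ℝ h0 h)

lemma isAdjEigenval_of_adjMatrix_mul_distMatrix [Nonempty V] (hf0 : f 0 ≠ 0)
    (hf : G.adjMatrix ℝ * distMatrix G f = θ • distMatrix G f) : IsAdjEigenval G θ :=
  exists_mulVec_eq_smul_of_mul_eq_smul (distMatrix_ne_zero hf0) hf

end DistMatrix

lemma IsStdSeq.mono {D D' : ℕ} {p : ℕ → ℕ → ℕ → ℕ} {θ : ℝ} {u : ℕ → ℝ} (hD : D ≤ D')
    (hu : IsStdSeq D' p θ u) : IsStdSeq D p θ u :=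
  ⟨hu.1, hu.2.1, fun i hi hiD => hu.2.2 i hi (by lia)⟩

lemma IsStdSeq.apply_one_ne_one {D : ℕ} {p : ℕ → ℕ → ℕ → ℕ} {θ : ℝ} {u : ℕ → ℝ}
    (hu : IsStdSeq D p θ u) (hk : p 0 1 1 ≠ 0) (hθ : θ ≠ p 0 1 1) : u 1 ≠ 1 := by
  rw [hu.2.1, Ne, div_eq_one_iff_eq (Nat.cast_ne_zero.2 hk)]
  exact hθ

namespace IsDRG

variable {V : Type*} [Fintype V] {G : SimpleGraph V} {D : ℕ} {p : ℕ → ℕ → ℕ → ℕ}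

lemma exists_dist_eq_of_le (h : IsDRG G D p) {i : ℕ} (hi : i ≤ D) : ∃ x y, G.dist x y = i := by
  induction hi using Nat.decreasingInduction with
  | self => exact h.exists_dist_eq
  | of_succ i _ ih =>
    obtain ⟨x, y, hxy⟩ := ih
    obtain ⟨z, -, hz⟩ := exists_adj_dist_eq_of_dist_eq_succ hxy
    exact ⟨z, y, hz⟩

lemma card_filter_dist (h : IsDRG G D p) {i j : ℕ} (hi : i ≤ D) (hj : j ≤ D) (x y : V) :
    #{z | G.dist x z = i ∧ G.dist z y = j} = p (G.dist x y) i j := by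
  rw [← h.inter _ i j (h.dist_le x y) hi hj x y rfl, ← Set.ncard_coe_finset]
  simp [G.dist_comm (v := y)]

theorem distMatrix_mul (h : IsDRG G D p) (f g : ℕ → ℝ) :
    distMatrix G f * distMatrix G g = distMatrix G fun l =>
      ∑ ij ∈ range (D + 1) ×ˢ range (D + 1), (p l ij.1 ij.2 : ℝ) * (f ij.1 * g ij.2) := by
  ext x y
  have hmaps : ∀ z ∈ univ, (G.dist x z, G.dist z y) ∈ range (D + 1) ×ˢ range (D + 1) := by
    simp [h.dist_le]
  rw [mul_apply, distMatrix_apply]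
  simp only [distMatrix_apply]
  rw [← sum_fiberwise_of_maps_to' hmaps fun ij : ℕ × ℕ => f ij.1 * g ij.2]
  refine sum_congr rfl fun ij hij => ?_
  simp only [mem_product, mem_range, Nat.lt_succ_iff] at hij
  rw [sum_const, nsmul_eq_mul, ← h.card_filter_dist hij.1 hij.2 x y]
  simp only [Prod.ext_iff]

theorem exists_distMatrix_mul_self [DecidableRel G.Adj] (h : IsDRG G D p) {θ : ℝ} {u : ℕ → ℝ}
    (hu0 : u 0 = 1) (hu : G.adjMatrix ℝ * distMatrix G u = θ • distMatrix G u) :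
    ∃ s : ℝ, 0 < s ∧ distMatrix G u * distMatrix G u = s • distMatrix G u := by
  obtain ⟨w, hw⟩ : ∃ w, distMatrix G u * distMatrix G u = distMatrix G w :=
    ⟨_, h.distMatrix_mul u u⟩
  obtain ⟨x, -⟩ := h.exists_dist_eq
  refine ⟨w 0, ?_, ?_⟩
  · have hdiag : w 0 = ∑ z, u (G.dist x z) * u (G.dist x z) := by
      simpa [mul_apply, G.dist_comm (v := x)] using (congrFun (congrFun hw x) x).symm
    rw [hdiag]
    exact sum_pos' (fun z _ => mul_self_nonneg _) ⟨x, mem_univ x, by simp [hu0]⟩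
  · rw [hw]
    refine distMatrix_eq_smul_of_adjMatrix_mul hu0 hu ?_
    rw [← hw, ← Matrix.mul_assoc, hu, Matrix.smul_mul]

lemma isRegularOfDegree [DecidableRel G.Adj] (h : IsDRG G D p) (hD : 1 ≤ D) :
    G.IsRegularOfDegree (p 0 1 1) := by
  intro x
  rw [← G.dist_self (v := x), ← h.card_filter_dist hD hD x x,
    ← SimpleGraph.card_neighborFinset_eq_degree]
  congr 1
  ext z
  simp [G.adj_comm z x]

lemma valency_pos (h : IsDRG G D p) (hD : 1 ≤ D) : 0 < p 0 1 1 := by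
  classical
  obtain ⟨x, y, hxy⟩ := h.exists_dist_eq_of_le hD
  rw [← h.isRegularOfDegree hD x, SimpleGraph.degree_pos_iff_exists_adj]
  exact ⟨y, SimpleGraph.dist_eq_one_iff_adj.1 hxy⟩

-- `IsDRG` leaves `p D 1 (D + 1)` unconstrained; the convention `b_D = 0` is the hypothesis `hbD`.
lemma card_filter_neighborFinset [DecidableRel G.Adj] (h : IsDRG G D p) (hD : 1 ≤ D)
    (hbD : p D 1 (D + 1) = 0) (x y : V) {j : ℕ} (hj : j ≤ G.dist x y + 1) :
    #{z ∈ G.neighborFinset x | G.dist z y = j} = p (G.dist x y) 1 j := by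
  have hxy := h.dist_le x y
  obtain hjD | rfl : j ≤ D ∨ j = D + 1 := by lia
  · rw [← h.card_filter_dist hD hjD]
    congr 1
    ext z
    simp
  · rw [show G.dist x y = D by lia, hbD, card_eq_zero, filter_eq_empty_iff]
    intro z _
    have := h.dist_le z y
    lia

lemma sum_neighborFinset_dist [DecidableRel G.Adj] (h : IsDRG G D p)
    (hbD : p D 1 (D + 1) = 0) {x y : V} {m : ℕ} (hxy : G.dist x y = m + 1) (f : ℕ → ℝ) :
    ∑ z ∈ G.neighborFinset x, f (G.dist z y) =
      p (m + 1) 1 m * f m + p (m + 1) 1 (m + 1) * f (m + 1) + p (m + 1) 1 (m + 2) * f (m + 2) := by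
  have hmaps : ∀ z ∈ G.neighborFinset x, G.dist z y ∈ ({m, m + 1, m + 2} : Finset ℕ) := by
    intro z hz
    have := ((G.mem_neighborFinset x z).1 hz).diff_dist_adj (u := y)
    rw [G.dist_comm (v := x), G.dist_comm (v := z)] at this
    simp only [mem_insert, mem_singleton]
    lia
  have hD : 1 ≤ D := by
    have := h.dist_le x y
    lia
  have hcard : ∀ j ≤ m + 2, #{z ∈ G.neighborFinset x | G.dist z y = j} = p (m + 1) 1 j := by
    intro j hj
    rw [h.card_filter_neighborFinset hD hbD x y (by lia), hxy]
  rw [← sum_fiberwise_of_maps_to' hmaps f]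
  simp [hcard, add_assoc]

lemma valency_eq_add (h : IsDRG G D p) (hbD : p D 1 (D + 1) = 0) {m : ℕ} (hm : m + 1 ≤ D) :
    (p 0 1 1 : ℝ) = p (m + 1) 1 m + p (m + 1) 1 (m + 1) + p (m + 1) 1 (m + 2) := by
  classical
  obtain ⟨x, y, hxy⟩ := h.exists_dist_eq_of_le hm
  have hsum := h.sum_neighborFinset_dist hbD hxy fun _ => 1
  simpa [h.isRegularOfDegree (by lia) x] using hsum

-- With `b_D = 0`, the extra equation `i = D` of `IsStdSeq (D + 1)` is what makes `θ` an eigenvalue.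
theorem adjMatrix_mul_distMatrix [DecidableRel G.Adj] (h : IsDRG G D p) (hD : 1 ≤ D)
    (hbD : p D 1 (D + 1) = 0) {θ : ℝ} {u : ℕ → ℝ} (hu : IsStdSeq (D + 1) p θ u) :
    G.adjMatrix ℝ * distMatrix G u = θ • distMatrix G u := by
  obtain ⟨hu0, hu1, hrec⟩ := hu
  ext x y
  simp only [SimpleGraph.adjMatrix_mul_apply, distMatrix_apply, Matrix.smul_apply, smul_eq_mul]
  rcases hxy : G.dist x y with _ | m
  · obtain rfl := h.connected.dist_eq_zero_iff.1 hxy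
    have hk : (p 0 1 1 : ℝ) ≠ 0 := mod_cast (h.valency_pos hD).ne'
    have hterm : ∀ z ∈ G.neighborFinset x, u (G.dist z x) = θ / p 0 1 1 := by
      intro z hz
      rw [SimpleGraph.dist_eq_one_iff_adj.2 ((G.mem_neighborFinset x z).1 hz).symm, hu1]
    rw [sum_congr rfl hterm, sum_const, SimpleGraph.card_neighborFinset_eq_degree,
      h.isRegularOfDegree hD x, nsmul_eq_mul, mul_div_cancel₀ _ hk, hu0, mul_one]
  · rw [h.sum_neighborFinset_dist hbD hxy]
    exact hrec (m + 1) (by lia) (hxy ▸ h.dist_le x y)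

end IsDRG

lemma qDistMatrix_eq_distMatrix {V : Type*} [Fintype V] (G : SimpleGraph V) (q : ℝ) :
    qDistMatrix G q = distMatrix G (qNumber (1 / q)) := rfl

section QDistMatrix

variable {V : Type*} [Fintype V] {G : SimpleGraph V} {D : ℕ} {p : ℕ → ℕ → ℕ → ℕ} {q θ : ℝ}
  {u : ℕ → ℝ}

lemma IsDRG.qDistMatrix_eq_smul (h : IsDRG G D p) (hu0 : u 0 = 1) (hu1 : u 1 ≠ 1)
    (hu : IsClassicalQType D q u) :
    qDistMatrix G q = (1 - u 1)⁻¹ • (distMatrix G 1 - distMatrix G u) := by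
  rw [eq_inv_smul_iff₀ (sub_ne_zero.2 hu1.symm)]
  ext x y
  simp [qDistMatrix_eq_distMatrix, hu.eq_classicalSeq hu0 (h.dist_le x y), classicalSeq]

lemma IsDRG.smul_distMatrix_add_smul_ne_one [DecidableEq V] (h : IsDRG G D p) (hD : 2 ≤ D)
    (hu : u 1 ≠ u 2) {a a' : ℝ} (ha' : a' ≠ 0) :
    a • distMatrix G 1 + a' • distMatrix G u ≠ 1 := by
  intro hone
  have hzero : ∀ i, 1 ≤ i → i ≤ D → a + a' * u i = 0 := by
    intro i hi hiD
    obtain ⟨x, y, rfl⟩ := h.exists_dist_eq_of_le hiD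
    have hxy : x ≠ y := by
      rintro rfl
      simp at hi
    simpa [hxy] using congrFun (congrFun hone x) y
  have heq := (hzero 1 le_rfl (by lia)).trans (hzero 2 (by lia) hD).symm
  exact hu (mul_left_cancel₀ ha' (add_left_cancel heq))

theorem IsDRG.exists_eigenvalues_qDistMatrix (h : IsDRG G D p) (hD : 2 ≤ D)
    (hbD : p D 1 (D + 1) = 0) (hq : q ≠ 0) (hθ : θ ≠ p 0 1 1) (hu : IsStdSeq (D + 1) p θ u)
    (huq : IsClassicalQType D q u) :
    ∃ a a' : ℝ, a ≠ a' ∧ a ≠ 0 ∧ a' ≠ 0 ∧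
      {η : ℝ | IsEigenval (qDistMatrix G q) η} = {a, a', 0} := by
  classical
  have hD1 : 1 ≤ D := by lia
  have : Nonempty V := h.connected.nonempty
  have hu1 : u 1 ≠ 1 := hu.apply_one_ne_one (h.valency_pos hD1).ne' hθ
  have hAU := h.adjMatrix_mul_distMatrix hD1 hbD hu
  have hJU := distMatrix_one_mul_eq_zero (h.isRegularOfDegree hD1) hθ hAU
  have hUJ : distMatrix G u * distMatrix G 1 = 0 := by
    simpa [transpose_distMatrix] using congrArg transpose hJU
  obtain ⟨s, hs, hUU⟩ := h.exists_distMatrix_mul_self hu.1 hAU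
  obtain ⟨n, hn, hJJ⟩ : ∃ n : ℝ, 0 < n ∧ distMatrix G 1 * distMatrix G 1 = n • distMatrix G 1 :=
    ⟨_, Nat.cast_pos.2 Fintype.card_pos, distMatrix_one_mul_self⟩
  obtain ⟨t, ht, hDt⟩ : ∃ t : ℝ, t ≠ 0 ∧
      qDistMatrix G q = t • (distMatrix G 1 - distMatrix G u) :=
    ⟨_, inv_ne_zero (sub_ne_zero.2 hu1.symm), h.qDistMatrix_eq_smul hu.1 hu1 huq⟩
  have hdecomp : qDistMatrix G q =
      (t * n) • n⁻¹ • distMatrix G 1 + (-(t * s)) • s⁻¹ • distMatrix G u := by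
    rw [hDt, smul_smul, smul_smul, neg_mul, mul_inv_cancel_right₀ hn.ne',
      mul_inv_cancel_right₀ hs.ne', neg_smul, smul_sub, sub_eq_add_neg]
  refine ⟨t * n, -(t * s), ?_, by positivity, neg_ne_zero.2 (by positivity), ?_⟩
  · rw [← mul_neg, Ne, mul_right_inj' ht]
    linarith
  · ext η
    rw [hdecomp]
    exact exists_mulVec_smul_add_smul_eq_smul_iff
      (isIdempotentElem_inv_smul hn.ne' hJJ) (isIdempotentElem_inv_smul hs.ne' hUU)
      (by simp [hJU]) (by simp [hUJ])
      (smul_ne_zero (inv_ne_zero hn.ne') (distMatrix_ne_zero one_ne_zero))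
      (smul_ne_zero (inv_ne_zero hs.ne') (distMatrix_ne_zero (by simp [hu.1])))
      (h.smul_distMatrix_add_smul_ne_one hD (huq.apply_one_ne_apply_two hD hq hu.1 hu1)
        (inv_ne_zero hs.ne'))

end QDistMatrix

/-- The intersection numbers `cᵢ = p i 1 (i - 1)` and `bᵢ = p i 1 (i + 1)` are given by the
classical parameters `(D, b, α, β)`, where `b` may be any real number. -/
structure HasClassicalParams (D : ℕ) (b α β : ℝ) (p : ℕ → ℕ → ℕ → ℕ) : Prop where
  c_eq : ∀ i : ℕ, i ≤ D →
    (p i 1 (i - 1) : ℝ) = qNumber b i * (1 + α * qNumber b (i - 1))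
  b_eq : ∀ i : ℕ, i ≤ D →
    (p i 1 (i + 1) : ℝ) = (qNumber b D - qNumber b i) * (β - α * qNumber b i)

namespace HasClassicalParams

variable {D : ℕ} {b α β : ℝ} {p : ℕ → ℕ → ℕ → ℕ}

lemma b_diam (h : HasClassicalParams D b α β p) : p D 1 (D + 1) = 0 := by
  simpa using h.b_eq D le_rfl

lemma b_sub_mul_c (h : HasClassicalParams D b α β p) (hb : b ≠ 0) {m : ℕ} (hm : m + 1 ≤ D) :
    (p (m + 1) 1 (m + 2) : ℝ) - b * p (m + 1) 1 m =
      p 0 1 1 * b ^ (m + 1) - b * (p 0 1 1 - (-1 + p 1 1 2 / b)) * qNumber b (m + 1) := by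
  have hk := h.b_eq 0 (by lia)
  have hb1 := h.b_eq 1 (by lia)
  have hc := h.c_eq (m + 1) hm
  have hbm := h.b_eq (m + 1) hm
  have hpow := sub_one_mul_qNumber b (m + 1)
  have hsucc := qNumber_succ b m
  simp only [qNumber_zero, qNumber_one, Nat.add_sub_cancel, Nat.reduceAdd, zero_add] at hk hb1 hc
  rw [hbm, hc, hk, hb1, eq_add_of_sub_eq hpow.symm, hsucc]
  field_simp
  ring

variable {V : Type*} [Fintype V] {G : SimpleGraph V}

lemma theta_ne_valency (h : HasClassicalParams D b α β p) (hdrg : IsDRG G D p) (hD : 1 ≤ D)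
    (hb : b ≠ 0) : -1 + (p 1 1 2 : ℝ) / b ≠ p 0 1 1 := by
  intro hθ
  have hk : (0 : ℝ) < p 0 1 1 := mod_cast hdrg.valency_pos hD
  have hquot : 0 < (p 1 1 2 : ℝ) / b := by linarith
  have hbpos : 0 < b := by
    by_contra! hneg
    exact hquot.not_ge (div_nonpos_of_nonneg_of_nonpos (Nat.cast_nonneg _) hneg)
  obtain ⟨m, rfl⟩ := Nat.exists_eq_add_of_le' hD
  have hend := h.b_sub_mul_c hb le_rfl
  rw [hθ, h.b_diam] at hend
  have hpos : 0 < (p 0 1 1 : ℝ) * b ^ (m + 1) := by positivity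
  have hnonneg : 0 ≤ b * p (m + 1) 1 m := by positivity
  rw [Nat.cast_zero, sub_self, mul_zero, zero_mul] at hend
  linarith

lemma isStdSeq (h : HasClassicalParams D b α β p) (hdrg : IsDRG G D p) (hD : 1 ≤ D)
    (hb : b ≠ 0) {θ : ℝ} (hθ : θ = -1 + (p 1 1 2 : ℝ) / b) :
    IsStdSeq (D + 1) p θ (classicalSeq b (1 - θ / p 0 1 1)) := by
  refine ⟨by simp [classicalSeq], by simp [classicalSeq], fun i hi hiD => ?_⟩
  obtain ⟨m, rfl⟩ := Nat.exists_eq_add_of_le' hi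
  rw [Nat.add_sub_cancel] at hiD ⊢
  set t := 1 - θ / p 0 1 1 with ht
  set u := classicalSeq b t with hu
  have hk : (p 0 1 1 : ℝ) ≠ 0 := mod_cast (hdrg.valency_pos hD).ne'
  have htk : p 0 1 1 - θ = p 0 1 1 * t := by
    rw [ht]
    field_simp
  have hprev : u m = u (m + 1) + t * (1 / b) ^ m := by
    simp only [hu, classicalSeq, qNumber_succ']
    ring
  have hnext : u (m + 2) = u (m + 1) - t * (1 / b) ^ (m + 1) := by
    simp only [hu, classicalSeq, qNumber_succ' _ (m + 1)]
    ring
  have hcur : u (m + 1) = 1 - t * ((1 / b) ^ m * qNumber b (m + 1)) := by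
    rw [hu, classicalSeq, qNumber_one_div_succ hb]
  have hkey : (1 / b) ^ (m + 1) * p (m + 1) 1 (m + 2) - (1 / b) ^ m * p (m + 1) 1 m =
      p 0 1 1 * u (m + 1) := by
    have h' := h.b_sub_mul_c hb hiD
    rw [← hθ, htk] at h'
    have hinv : b * (1 / b) = 1 := mul_one_div_cancel hb
    have hpow : b ^ (m + 1) * (1 / b) ^ (m + 1) = 1 := by rw [← mul_pow, hinv, one_pow]
    rw [hcur]
    linear_combination (1 / b) ^ (m + 1) * h' + p 0 1 1 * hpow +
      (1 / b) ^ m * (p (m + 1) 1 m - p 0 1 1 * t * qNumber b (m + 1)) * hinv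
  rw [hprev, hnext]
  linear_combination u (m + 1) * htk - t * hkey - u (m + 1) * hdrg.valency_eq_add h.b_diam hiD

end HasClassicalParams

theorem stmt8_general {V : Type*} [Fintype V] (G : SimpleGraph V) [DecidableRel G.Adj]
    (D : ℕ) (p : ℕ → ℕ → ℕ → ℕ) (hdrg : IsDRG G D p) (hD : 2 ≤ D)
    (b : ℝ) (hb : b ≠ 0) (α β : ℝ) (hcl : HasClassicalParams D b α β p) :
    IsAdjEigenval G (-1 + (p 1 1 2 : ℝ) / b) ∧
      (∃ u : ℕ → ℝ, IsStdSeq D p (-1 + (p 1 1 2 : ℝ) / b) u ∧ IsClassicalQType D b u) ∧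
      (∃ a a' : ℝ, a ≠ a' ∧ a ≠ 0 ∧ a' ≠ 0 ∧
        {η : ℝ | IsEigenval (qDistMatrix G b) η} = {a, a', 0}) := by
  have hD1 : 1 ≤ D := by lia
  have : Nonempty V := hdrg.connected.nonempty
  have hstd := hcl.isStdSeq hdrg hD1 hb rfl
  have hAU := hdrg.adjMatrix_mul_distMatrix hD1 hcl.b_diam hstd
  have htype := isClassicalQType_classicalSeq D b (1 - (-1 + (p 1 1 2 : ℝ) / b) / p 0 1 1)
  exact ⟨isAdjEigenval_of_adjMatrix_mul_distMatrix (by simp [hstd.1]) hAU,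
    ⟨_, hstd.mono D.le_succ, htype⟩,
    hdrg.exists_eigenvalues_qDistMatrix hD hcl.b_diam hb (hcl.theta_ne_valency hdrg hD1 hb) hstd
      htype⟩

/-- Let `Γ` be a distance-regular graph of diameter `D ≥ 3` with classical parameters
`(D, b, α, β)` (`b` an integer, `b ≠ 0, -1`). Then `θ = -1 + b₁/b` is an eigenvalue of `Γ`
of classical `b`-type; in particular the `b`-distance matrix has exactly three distinct
eigenvalues, one of which is `0`. -/
theorem stmt8 {V : Type*} [Fintype V] (G : SimpleGraph V) [DecidableRel G.Adj]
    (D : ℕ) (p : ℕ → ℕ → ℕ → ℕ) (hdrg : IsDRG G D p) (hD : 3 ≤ D)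
    (b : ℤ) (hb0 : b ≠ 0) (hb1 : b ≠ -1) (α β : ℝ)
    (hc : ∀ i : ℕ, i ≤ D →
      (p i 1 (i - 1) : ℝ) = gaussCoeff b i * (1 + α * gaussCoeff b (i - 1)))
    (hbi : ∀ i : ℕ, i ≤ D →
      (p i 1 (i + 1) : ℝ) = (gaussCoeff b D - gaussCoeff b i) * (β - α * gaussCoeff b i)) :
    IsAdjEigenval G (-1 + (p 1 1 2 : ℝ) / (b : ℝ)) ∧
      (∃ u : ℕ → ℝ, IsStdSeq D p (-1 + (p 1 1 2 : ℝ) / (b : ℝ)) u ∧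
        IsClassicalQType D (b : ℝ) u) ∧
      (∃ a a' : ℝ, a ≠ a' ∧ a ≠ 0 ∧ a' ≠ 0 ∧
        {η : ℝ | IsEigenval (qDistMatrix G (b : ℝ)) η} = {a, a', 0}) :=
  stmt8_general G D p hdrg (by lia) b (Int.cast_ne_zero.2 hb0) α β ⟨hc, hbi⟩
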